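/- The thickness of the complete tripartite graph K_{2,9,9} equals 3. -/

import Mathlib

open SimpleGraph

/-- A simple graph is planar if it admits a drawing in the plane: an injective
placement of vertices and, for each edge, an injective continuous arc joining
the images of its endpoints, such that arcs avoid vertex images in their
interiors and distinct arcs meet only at vertex images. -/
def IsPlanar {V : Type*} (G : SimpleGraph V) : Prop :=
  ∃ (f : V → ℝ × ℝ) (γ : G.edgeSet → (Set.Icc (0:ℝ) 1 → ℝ × ℝ)),
    Function.Injective f ∧
    (∀ e : G.edgeSet, Continuous (γ e)) ∧
    (∀ e : G.edgeSet, ∃ u v : V, (e : Sym2 V) = s(u, v) ∧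
      γ e ⟨0, by norm_num⟩ = f u ∧ γ e ⟨1, by norm_num⟩ = f v) ∧
    (∀ e : G.edgeSet, Function.Injective (γ e)) ∧
    (∀ e : G.edgeSet, ∀ t : Set.Icc (0:ℝ) 1, (t : ℝ) ≠ 0 → (t : ℝ) ≠ 1 →
      ∀ v : V, γ e t ≠ f v) ∧
    (∀ e e' : G.edgeSet, e ≠ e' → ∀ s t : Set.Icc (0:ℝ) 1,
      γ e s = γ e' t → γ e s ∈ Set.range f)

/-- The thickness of a graph: the least `n` such that `G` is the union of `n`
planar subgraphs. -/
noncomputable def thickness {V : Type*} (G : SimpleGraph V) : ℕ :=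
  sInf {n : ℕ | ∃ H : Fin n → SimpleGraph V,
    (∀ i, H i ≤ G) ∧ (∀ i, IsPlanar (H i)) ∧ (⨆ i, H i) = G}

theorem log_plane (F : ℝ × ℝ → ℂ) (hF : Continuous F) (h0 : ∀ p, F p ≠ 0) :
    ∃ L : ℝ × ℝ → ℂ, Continuous L ∧ ∀ p, Complex.exp (L p) = F p := by
  obtain ⟨L, ⟨_, hL⟩, _⟩ := Complex.isCoveringMapOn_exp.existsUnique_continuousMap_lifts
    (⟨F, hF⟩ : C(ℝ × ℝ, ℂ)) (a₀ := (0, 0)) (e₀ := Complex.log (F (0, 0)))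
    (by simpa using Complex.exp_log (h0 _)) (fun a => by simpa using h0 a)
  exact ⟨L, L.continuous, fun p => congrFun hL p⟩

theorem log_line (g : ℝ → ℂ) (hg : Continuous g) (h0 : ∀ t, g t ≠ 0) :
    ∃ l : ℝ → ℂ, Continuous l ∧ ∀ t, Complex.exp (l t) = g t := by
  obtain ⟨L, hL, h⟩ := log_plane (fun p => g p.1) (by fun_prop) (fun p => h0 _)
  exact ⟨fun t => L (t, 0), by fun_prop, fun t => h (t, 0)⟩

theorem log_unique (l m : ℝ → ℂ) (hl : Continuous l) (hm : Continuous m)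
    (h : ∀ t, Complex.exp (l t) = Complex.exp (m t)) (s t : ℝ) : l s - l t = m s - m t := by
  have hg : Continuous fun t => Complex.exp (l t) := by fun_prop
  obtain ⟨L, _, hu⟩ := Complex.isCoveringMapOn_exp.existsUnique_continuousMap_lifts
    (⟨_, hg⟩ : C(ℝ, ℂ)) (a₀ := 0) (e₀ := l 0) rfl (fun a => by simp)
  have h1 := hu ⟨l, hl⟩ ⟨rfl, rfl⟩
  have h2 := hu ⟨fun t => m t + (l 0 - m 0), by fun_prop⟩ ⟨by simp, by
    funext t
    simp [Complex.exp_add, Complex.exp_sub, h]⟩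
  have h3 := h1.trans h2.symm
  have e1 := congrArg (fun f : C(ℝ, ℂ) => f s) h3
  have e2 := congrArg (fun f : C(ℝ, ℂ) => f t) h3
  simp only [ContinuousMap.coe_mk] at e1 e2
  rw [e1, e2]; ring

theorem square_rel (g h : ℝ → ℂ) (hg : Continuous g) (hh : Continuous h)
    (hne : ∀ s t, g s ≠ h t) (ga gb hu hv : ℝ → ℂ) (cga : Continuous ga) (cgb : Continuous gb)
    (chu : Continuous hu) (chv : Continuous hv)
    (ega : ∀ t, Complex.exp (ga t) = g t - h 0) (egb : ∀ t, Complex.exp (gb t) = g t - h 1)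
    (ehu : ∀ t, Complex.exp (hu t) = h t - g 0) (ehv : ∀ t, Complex.exp (hv t) = h t - g 1) :
    (gb 1 - gb 0) - (ga 1 - ga 0) = (hv 1 - hv 0) - (hu 1 - hu 0) := by
  obtain ⟨L, hL, h⟩ := log_plane (fun p => g p.1 - h p.2) (by fun_prop)
    (fun p => sub_ne_zero.2 (hne _ _))
  have e1 := log_unique ga (fun t => L (t, 0)) cga (by fun_prop) (by simp [h, ega]) 1 0
  have e2 := log_unique gb (fun t => L (t, 1)) cgb (by fun_prop) (by simp [h, egb]) 1 0
  have e3 := log_unique hu (fun t => L (0, t) + Real.pi * Complex.I) chu (by fun_prop)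
    (by simp [h, ehu, Complex.exp_add]) 1 0
  have e4 := log_unique hv (fun t => L (1, t) + Real.pi * Complex.I) chv (by fun_prop)
    (by simp [h, ehv, Complex.exp_add]) 1 0
  rw [e1, e2, e3, e4]; ring

/-- Vanishing of the (mod 2) van Kampen obstruction. -/
def Flat {V : Type*} (G : SimpleGraph V) : Prop :=
  ∃ (x : Sym2 V → V → ZMod 2) (o : V → V → ZMod 2),
    (∀ u v, u ≠ v → o u v + o v u = 1) ∧
    ∀ u v a b, G.Adj u v → G.Adj a b → u ≠ a → u ≠ b → v ≠ a → v ≠ b →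
      x s(u, v) a + x s(u, v) b + x s(a, b) u + x s(a, b) v = o u a + o u b + o v a + o v b

theorem flat_of_planar {V : Type*} (G : SimpleGraph V) (hG : IsPlanar G) : Flat G := by
  classical
  obtain ⟨f, γ, finj, γc, γe, γi, γv, γγ⟩ := hG
  let c : ℝ × ℝ → ℂ := fun p => ⟨p.1, p.2⟩
  have cc : Continuous c := by
    have : c = Complex.equivRealProdCLM.symm := rfl
    rw [this]; exact Complex.equivRealProdCLM.symm.continuous
  have cinj : Function.Injective c := by
    intro p q h
    have := congrArg Complex.re h
    have := congrArg Complex.im h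
    exact Prod.ext ‹_› ‹_›
  choose U W hUW hU hW using γe
  let g : G.edgeSet → ℝ → ℂ := fun e t => c (γ e (Set.projIcc 0 1 zero_le_one t))
  have gc : ∀ e, Continuous (g e) := fun e =>
    cc.comp ((γc e).comp continuous_projIcc)
  have g0 : ∀ e, g e 0 = c (f (U e)) := by
    intro e; simp only [g, Set.projIcc_left]; rw [← hU]
  have g1 : ∀ e, g e 1 = c (f (W e)) := by
    intro e; simp only [g, Set.projIcc_right]; rw [← hW]
  have gv : ∀ (e : G.edgeSet) (a : V), a ∉ (e : Sym2 V) → ∀ t, g e t ≠ c (f a) := by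
    intro e a ha t h
    have h := cinj h
    by_cases t0 : ((Set.projIcc (0:ℝ) 1 zero_le_one t : Set.Icc (0:ℝ) 1) : ℝ) = 0
    · have : Set.projIcc (0:ℝ) 1 zero_le_one t = ⟨0, by norm_num⟩ := Subtype.ext t0
      rw [this, hU] at h
      apply ha; rw [hUW, ← finj h]; simp
    by_cases t1 : ((Set.projIcc (0:ℝ) 1 zero_le_one t : Set.Icc (0:ℝ) 1) : ℝ) = 1
    · have : Set.projIcc (0:ℝ) 1 zero_le_one t = ⟨1, by norm_num⟩ := Subtype.ext t1
      rw [this, hW] at h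
      apply ha; rw [hUW, ← finj h]; simp
    exact γv e _ t0 t1 a h
  have gg : ∀ e e' : G.edgeSet, (∀ a, a ∈ (e : Sym2 V) → a ∉ (e' : Sym2 V)) →
      ∀ s t, g e s ≠ g e' t := by
    intro e e' hd s t h
    have h' := cinj h
    have hne : e ≠ e' := by
      rintro rfl
      exact hd (U e) (by rw [hUW]; simp) (by rw [hUW]; simp)
    obtain ⟨a, ha⟩ := γγ e e' hne _ _ h'
    by_cases hae : a ∈ (e : Sym2 V)
    · refine gv e' a (hd a hae) t ?_
      simp only [g]; rw [← h', ha]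
    · refine gv e a hae s ?_
      simp only [g]; rw [ha]
  have hl : ∀ e : G.edgeSet, ∀ a, ∃ l : ℝ → ℂ, a ∉ (e : Sym2 V) →
      (Continuous l ∧ ∀ t, Complex.exp (l t) = g e t - c (f a)) := by
    intro e a
    by_cases ha : a ∈ (e : Sym2 V)
    · exact ⟨0, fun h => absurd ha h⟩
    obtain ⟨l, h1, h2⟩ := log_line (fun t => g e t - c (f a)) (by have := gc e; fun_prop)
      (fun t => sub_ne_zero.2 (gv e a ha t))
    exact ⟨l, fun _ => ⟨h1, h2⟩⟩
  choose l hl using hl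
  let lam : V → V → ℂ := fun a v => Complex.log (c (f v) - c (f a))
  have hlam : ∀ a v, a ≠ v → Complex.exp (lam a v) = c (f v) - c (f a) := by
    intro a v h
    exact Complex.exp_log (sub_ne_zero.2 fun h' => h (finj (cinj h')).symm)
  have hn : ∀ e : G.edgeSet, ∀ a, ∃ n : ℤ, a ∉ (e : Sym2 V) →
      l e a 1 - l e a 0 = lam a (W e) - lam a (U e) + n * (2 * Real.pi * Complex.I) := by
    intro e a
    by_cases ha : a ∈ (e : Sym2 V)
    · exact ⟨0, fun h => absurd ha h⟩
    have h1 : a ≠ U e := by rintro rfl; apply ha; rw [hUW]; simp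
    have h2 : a ≠ W e := by rintro rfl; apply ha; rw [hUW]; simp
    obtain ⟨n, hn⟩ := Complex.exp_eq_exp_iff_exists_int.1
      (show Complex.exp (l e a 1 - l e a 0) = Complex.exp (lam a (W e) - lam a (U e)) by
        rw [Complex.exp_sub, Complex.exp_sub, hlam _ _ h1, hlam _ _ h2, (hl e a ha).2,
          (hl e a ha).2, g0, g1])
    exact ⟨n, fun _ => hn⟩
  choose n hn using hn
  have hk : ∀ a v, ∃ k : ℤ, a ≠ v →
      lam a v - lam v a = Real.pi * Complex.I + k * (2 * Real.pi * Complex.I) := by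
    intro a v
    by_cases h : a = v
    · exact ⟨0, fun h' => absurd h h'⟩
    obtain ⟨n, hn⟩ := Complex.exp_eq_exp_iff_exists_int.1
      (show Complex.exp (lam a v - lam v a) = Complex.exp (Real.pi * Complex.I) by
        rw [Complex.exp_sub, hlam _ _ h, hlam _ _ (Ne.symm h), Complex.exp_pi_mul_I,
          div_eq_iff (by
            rw [← hlam _ _ (Ne.symm h)]; exact Complex.exp_ne_zero _)]
        ring)
    exact ⟨n, fun _ => hn⟩
  choose k hk using hk
  have hpi : (2 * Real.pi * Complex.I : ℂ) ≠ 0 := Complex.two_pi_I_ne_zero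
  have two : (2 : ZMod 2) = 0 := rfl
  refine ⟨fun e a => if h : e ∈ G.edgeSet then (n ⟨e, h⟩ a : ZMod 2) else 0,
    fun a v => (k a v : ZMod 2), ?_, ?_⟩
  · intro u v huv
    have h1 := hk u v huv
    have h2 := hk v u huv.symm
    have h3 : ((k u v + k v u + 1 : ℤ) : ℂ) * (2 * Real.pi * Complex.I) = 0 := by
      push_cast
      linear_combination -h1 - h2
    have h4 : k u v + k v u + 1 = 0 := by
      have := (mul_eq_zero.1 h3).resolve_right hpi
      exact_mod_cast this
    have h5 : ((k u v + k v u + 1 : ℤ) : ZMod 2) = 0 := by rw [h4]; simp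
    push_cast at h5
    linear_combination h5 - two
  · intro u v a b huv hab hua hub hva hvb
    have he : s(u, v) ∈ G.edgeSet := huv
    have he' : s(a, b) ∈ G.edgeSet := hab
    simp only [he, he', dif_pos]
    generalize hE : (⟨s(u, v), he⟩ : G.edgeSet) = e
    generalize hE' : (⟨s(a, b), he'⟩ : G.edgeSet) = e'
    have hEe : (e : Sym2 V) = s(u, v) := by rw [← hE]
    have hEe' : (e' : Sym2 V) = s(a, b) := by rw [← hE']
    have hd : ∀ z, z ∈ (e : Sym2 V) → z ∉ (e' : Sym2 V) := by
      intro z; rw [hEe, hEe']; simp only [Sym2.mem_iff]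
      rintro (rfl | rfl) <;> simp [*]
    have mU : U e ∈ (e : Sym2 V) := by rw [hUW]; simp
    have mW : W e ∈ (e : Sym2 V) := by rw [hUW]; simp
    have mU' : U e' ∈ (e' : Sym2 V) := by rw [hUW]; simp
    have mW' : W e' ∈ (e' : Sym2 V) := by rw [hUW]; simp
    have nU := hd _ mU
    have nW := hd _ mW
    have nU' : U e' ∉ (e : Sym2 V) := fun h => hd _ h mU'
    have nW' : W e' ∉ (e : Sym2 V) := fun h => hd _ h mW'
    have rel := square_rel (g e) (g e') (gc _) (gc _) (gg e e' hd)
      (l e (U e')) (l e (W e')) (l e' (U e)) (l e' (W e))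
      (hl _ _ nU').1 (hl _ _ nW').1 (hl _ _ nU).1 (hl _ _ nW).1
      (by rw [g0]; exact (hl _ _ nU').2) (by rw [g1]; exact (hl _ _ nW').2)
      (by rw [g0]; exact (hl _ _ nU).2) (by rw [g1]; exact (hl _ _ nW).2)
    rw [hn _ _ nU', hn _ _ nW', hn _ _ nU, hn _ _ nW] at rel
    have k1 := hk (U e) (U e') (fun h => nU (h ▸ mU'))
    have k2 := hk (U e) (W e') (fun h => nU (h ▸ mW'))
    have k3 := hk (W e) (U e') (fun h => nW (h ▸ mU'))
    have k4 := hk (W e) (W e') (fun h => nW (h ▸ mW'))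
    have h3 : ((n e (W e') - n e (U e') - n e' (W e) + n e' (U e)
        - (k (W e) (W e') - k (W e) (U e') - k (U e) (W e') + k (U e) (U e')) : ℤ) : ℂ)
        * (2 * Real.pi * Complex.I) = 0 := by
      push_cast
      linear_combination rel + k4 - k3 - k2 + k1
    have h4 := (mul_eq_zero.1 h3).resolve_right hpi
    have h4 : (n e (W e') - n e (U e') - n e' (W e) + n e' (U e)
        - (k (W e) (W e') - k (W e) (U e') - k (U e) (W e') + k (U e) (U e')) : ℤ) = 0 := by
      exact_mod_cast h4
    have h5 := congrArg (fun z : ℤ => (z : ZMod 2)) h4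
    push_cast at h5
    simp only [CharTwo.sub_eq_add] at h5
    have key : (n e (U e') + n e (W e') + n e' (U e) + n e' (W e) : ZMod 2)
        = k (U e) (U e') + k (U e) (W e') + k (W e) (U e') + k (W e) (W e') := by
      linear_combination h5 - (k (U e) (U e') + k (U e) (W e') + k (W e) (U e') + k (W e) (W e') : ZMod 2) * two
    have q1 := (hUW e).symm.trans hEe
    have q2 := (hUW e').symm.trans hEe'
    rcases Sym2.eq_iff.1 q1 with ⟨r1, r2⟩ | ⟨r1, r2⟩ <;>
    rcases Sym2.eq_iff.1 q2 with ⟨r3, r4⟩ | ⟨r3, r4⟩ <;>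
    rw [r1, r2, r3, r4] at key <;> linear_combination key

theorem two_zmod : (2 : ZMod 2) = 0 := rfl

theorem not_flat_K33 {V : Type*} (G : SimpleGraph V) (hG : Flat G) (a b c p q r : V)
    (hn : [a, b, c, p, q, r].Nodup)
    (hap : G.Adj a p) (haq : G.Adj a q) (har : G.Adj a r) (hbp : G.Adj b p) (hbq : G.Adj b q) (hbr : G.Adj b r) (hcp : G.Adj c p) (hcq : G.Adj c q) (hcr : G.Adj c r) : False := by
  obtain ⟨x, o, ho, hx⟩ := hG
  simp only [List.nodup_cons, List.mem_cons, List.not_mem_nil, or_false, not_or] at hn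
  obtain ⟨⟨nab, nac, nap, naq, nar⟩, ⟨nbc, nbp, nbq, nbr⟩, ⟨ncp, ncq, ncr⟩, ⟨npq, npr⟩, nqr, _⟩ := hn
  have e0 := hx a p b q hap hbq nab naq (Ne.symm nbp) npq
  have e1 := hx a p b r hap hbr nab nar (Ne.symm nbp) npr
  have e2 := hx a p c q hap hcq nac naq (Ne.symm ncp) npq
  have e3 := hx a p c r hap hcr nac nar (Ne.symm ncp) npr
  have e4 := hx a q b p haq hbp nab nap (Ne.symm nbq) (Ne.symm npq)
  have e5 := hx a q b r haq hbr nab nar (Ne.symm nbq) nqr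
  have e6 := hx a q c p haq hcp nac nap (Ne.symm ncq) (Ne.symm npq)
  have e7 := hx a q c r haq hcr nac nar (Ne.symm ncq) nqr
  have e8 := hx a r b p har hbp nab nap (Ne.symm nbr) (Ne.symm npr)
  have e9 := hx a r b q har hbq nab naq (Ne.symm nbr) (Ne.symm nqr)
  have e10 := hx a r c p har hcp nac nap (Ne.symm ncr) (Ne.symm npr)
  have e11 := hx a r c q har hcq nac naq (Ne.symm ncr) (Ne.symm nqr)
  have e12 := hx b p c q hbp hcq nbc nbq (Ne.symm ncp) npq
  have e13 := hx b p c r hbp hcr nbc nbr (Ne.symm ncp) npr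
  have e14 := hx b q c p hbq hcp nbc nbp (Ne.symm ncq) (Ne.symm npq)
  have e15 := hx b q c r hbq hcr nbc nbr (Ne.symm ncq) nqr
  have e16 := hx b r c p hbr hcp nbc nbp (Ne.symm ncr) (Ne.symm npr)
  have e17 := hx b r c q hbr hcq nbc nbq (Ne.symm ncr) (Ne.symm nqr)
  have wpb : o p b = o b p + 1 := by linear_combination ho b p nbp - o b p * two_zmod
  have wqb : o q b = o b q + 1 := by linear_combination ho b q nbq - o b q * two_zmod
  have wrb : o r b = o b r + 1 := by linear_combination ho b r nbr - o b r * two_zmod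
  have wpc : o p c = o c p + 1 := by linear_combination ho c p ncp - o c p * two_zmod
  have wqc : o q c = o c q + 1 := by linear_combination ho c q ncq - o c q * two_zmod
  have wrc : o r c = o c r + 1 := by linear_combination ho c r ncr - o c r * two_zmod
  have wqp : o q p = o p q + 1 := by linear_combination ho p q npq - o p q * two_zmod
  have wrp : o r p = o p r + 1 := by linear_combination ho p r npr - o p r * two_zmod
  have wrq : o r q = o q r + 1 := by linear_combination ho q r nqr - o q r * two_zmod
  simp only [wpb, wqb, wrb, wpc, wqc, wrc, wqp, wrp, wrq] at e0 e1 e2 e3 e4 e5 e6 e7 e8 e9 e10 e11 e12 e13 e14 e15 e16 e17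
  have X : (1 : ZMod 2) = 0 := by
    linear_combination (norm := (ring_nf; reduce_mod_char)) e0 + e1 + e2 + e3 + e4 + e5 + e6 + e7 + e8 + e9 + e10 + e11 + e12 + e13 + e14 + e15 + e16 + e17
  exact absurd X (by decide)

theorem not_flat_K5 {V : Type*} (G : SimpleGraph V) (hG : Flat G) (a b c d e : V)
    (hn : [a, b, c, d, e].Nodup)
    (hab : G.Adj a b) (hac : G.Adj a c) (had : G.Adj a d) (hae : G.Adj a e) (hbc : G.Adj b c) (hbd : G.Adj b d) (hbe : G.Adj b e) (hcd : G.Adj c d) (hce : G.Adj c e) (hde : G.Adj d e) : False := by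
  obtain ⟨x, o, ho, hx⟩ := hG
  simp only [List.nodup_cons, List.mem_cons, List.not_mem_nil, or_false, not_or] at hn
  obtain ⟨⟨nab, nac, nad, nae⟩, ⟨nbc, nbd, nbe⟩, ⟨ncd, nce⟩, nde, _⟩ := hn
  have e0 := hx a b c d hab hcd nac nad nbc nbd
  have e1 := hx a b c e hab hce nac nae nbc nbe
  have e2 := hx a b d e hab hde nad nae nbd nbe
  have e3 := hx a c b d hac hbd nab nad (Ne.symm nbc) ncd
  have e4 := hx a c b e hac hbe nab nae (Ne.symm nbc) nce
  have e5 := hx a c d e hac hde nad nae ncd nce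
  have e6 := hx a d b c had hbc nab nac (Ne.symm nbd) (Ne.symm ncd)
  have e7 := hx a d b e had hbe nab nae (Ne.symm nbd) nde
  have e8 := hx a d c e had hce nac nae (Ne.symm ncd) nde
  have e9 := hx a e b c hae hbc nab nac (Ne.symm nbe) (Ne.symm nce)
  have e10 := hx a e b d hae hbd nab nad (Ne.symm nbe) (Ne.symm nde)
  have e11 := hx a e c d hae hcd nac nad (Ne.symm nce) (Ne.symm nde)
  have e12 := hx b c d e hbc hde nbd nbe ncd nce
  have e13 := hx b d c e hbd hce nbc nbe (Ne.symm ncd) nde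
  have e14 := hx b e c d hbe hcd nbc nbd (Ne.symm nce) (Ne.symm nde)
  have wcb : o c b = o b c + 1 := by linear_combination ho b c nbc - o b c * two_zmod
  have wdb : o d b = o b d + 1 := by linear_combination ho b d nbd - o b d * two_zmod
  have web : o e b = o b e + 1 := by linear_combination ho b e nbe - o b e * two_zmod
  have wdc : o d c = o c d + 1 := by linear_combination ho c d ncd - o c d * two_zmod
  have wec : o e c = o c e + 1 := by linear_combination ho c e nce - o c e * two_zmod
  have wed : o e d = o d e + 1 := by linear_combination ho d e nde - o d e * two_zmod
  simp only [wcb, wdb, web, wdc, wec, wed] at e0 e1 e2 e3 e4 e5 e6 e7 e8 e9 e10 e11 e12 e13 e14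
  have X : (1 : ZMod 2) = 0 := by
    linear_combination (norm := (ring_nf; reduce_mod_char)) e0 + e1 + e2 + e3 + e4 + e5 + e6 + e7 + e8 + e9 + e10 + e11 + e12 + e13 + e14
  exact absurd X (by decide)
theorem Flat.mono {V : Type*} {G H : SimpleGraph V} (h : H ≤ G) (hG : Flat G) : Flat H := by
  obtain ⟨x, o, ho, hx⟩ := hG
  exact ⟨x, o, ho, fun u v a b h1 h2 => hx u v a b (h h1) (h h2)⟩

theorem Flat.comap {V W : Type*} {G : SimpleGraph V} (f : W → V) (hf : Function.Injective f)
    (hG : Flat G) : Flat (G.comap f) := by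
  obtain ⟨x, o, ho, hx⟩ := hG
  refine ⟨fun e a => x (e.map f) (f a), fun a b => o (f a) (f b),
    fun u v h => ho _ _ (hf.ne h), fun u v a b h1 h2 n1 n2 n3 n4 => ?_⟩
  exact hx _ _ _ _ h1 h2 (hf.ne n1) (hf.ne n2) (hf.ne n3) (hf.ne n4)

/-- Contract the edge `p q` onto `p`. -/
def contr {V : Type*} (G : SimpleGraph V) (p q : V) : SimpleGraph V where
  Adj u w := u ≠ q ∧ w ≠ q ∧ u ≠ w ∧
    (G.Adj u w ∨ (u = p ∧ G.Adj q w) ∨ (w = p ∧ G.Adj q u))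
  symm := ⟨by
    rintro u w ⟨h1, h2, h3, h4⟩
    refine ⟨h2, h1, h3.symm, ?_⟩
    rcases h4 with h | h | h
    · exact Or.inl h.symm
    · exact Or.inr (Or.inr h)
    · exact Or.inr (Or.inl h)⟩
  loopless := ⟨by rintro u ⟨_, _, h, _⟩; exact h rfl⟩

theorem Flat.contr {V : Type*} {G : SimpleGraph V} (hG : Flat G) (p q : V) (hpq : G.Adj p q) :
    Flat (contr G p q) := by
  classical
  obtain ⟨x, o, ho, hx⟩ := hG
  let y : Sym2 V → V → ZMod 2 := fun e a => if e ∈ G.edgeSet then x e a else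
    x s(p, q) a + x (e.map (fun z => if z = p then q else z)) a
  have y1 : ∀ u v, G.Adj u v → y s(u, v) = x s(u, v) := by
    intro u v h; funext a; simp [y, h]
  have y2 : ∀ v, ¬ G.Adj p v → v ≠ p → ∀ a, y s(p, v) a = x s(p, q) a + x s(q, v) a := by
    intro v h hv a
    simp [y, h, hv]
  have hy : ∀ u v a b, (_root_.contr G p q).Adj u v → G.Adj a b → a ≠ q → b ≠ q →
      u ≠ a → u ≠ b → v ≠ a → v ≠ b →
      y s(u, v) a + y s(u, v) b + x s(a, b) u + x s(a, b) v
        = o u a + o u b + o v a + o v b := by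
    intro u v a b h hab ha hb n1 n2 n3 n4
    by_cases g : G.Adj u v
    · rw [y1 _ _ g]; exact hx _ _ _ _ g hab n1 n2 n3 n4
    obtain ⟨m1, m2, m3, h | ⟨rfl, h⟩ | ⟨rfl, h⟩⟩ := h
    · exact absurd h g
    · rw [y2 _ g m3.symm, y2 _ g m3.symm]
      linear_combination hx u q a b hpq hab n1 n2 ha.symm hb.symm
        + hx q v a b h hab ha.symm hb.symm n3 n4 
        + (- x s(a, b) q + o q a + o q b) * two_zmod
    · rw [Sym2.eq_swap, y2 _ (fun h => g h.symm) m3, y2 _ (fun h => g h.symm) m3]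
      linear_combination hx v q a b hpq hab n3 n4 ha.symm hb.symm
        + hx q u a b h hab ha.symm hb.symm n1 n2
        + (- x s(a, b) q + o q a + o q b) * two_zmod
  have os : ∀ u v, u ≠ v → o u v = o v u + 1 := fun u v h => by
    linear_combination ho u v h - o v u * two_zmod
  refine ⟨y, o, ho, ?_⟩
  intro u v a b huv hab n1 n2 n3 n4
  by_cases g : G.Adj a b
  · rw [y1 _ _ g]; exact hy _ _ _ _ huv g hab.1 hab.2.1 n1 n2 n3 n4
  by_cases g' : G.Adj u v
  · have := hy _ _ _ _ hab g' huv.1 huv.2.1 n1.symm n3.symm n2.symm n4.symm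
    rw [y1 _ _ g']
    rw [os u a n1, os u b n2, os v a n3, os v b n4]
    linear_combination this + (-2) * two_zmod
  · obtain ⟨-, -, -, h | ⟨h1, -⟩ | ⟨h1, -⟩⟩ := huv
    · exact absurd h g'
    all_goals
      obtain ⟨-, -, -, h | ⟨h2, -⟩ | ⟨h2, -⟩⟩ := hab
      · exact absurd h g
      all_goals
        exfalso; subst h1; subst h2
        simp at n1 n2 n3 n4

section
open Classical

theorem card_contr {V : Type*} [Fintype V] (G : SimpleGraph V) (p q : V) (hpq : G.Adj p q) :
    G.edgeFinset.card ≤ (contr G p q).edgeFinset.card + 1 +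
      (G.neighborFinset p ∩ G.neighborFinset q).card := by
  set C := G.neighborFinset p ∩ G.neighborFinset q with hC
  let B : Finset (Sym2 V) := insert s(p, q) (C.image fun w => s(q, w))
  have hB : B.card ≤ 1 + C.card := by
    refine (Finset.card_insert_le _ _).trans ?_
    have := Finset.card_image_le (s := C) (f := fun w => s(q, w))
    omega
  have hT : (G.edgeFinset \ B).card ≤ (contr G p q).edgeFinset.card := by
    refine Finset.card_le_card_of_injOn (Sym2.map fun z => if z = q then p else z) ?_ ?_
    · intro e
      induction e with | _ u v
      intro h
      simp [B, hC] at h ⊢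
      simp only [contr]
      have := G.ne_of_adj hpq
      grind [SimpleGraph.adj_comm, SimpleGraph.ne_of_adj]
    · intro e he e' he' h
      induction e with | _ u v
      induction e' with | _ a b
      simp [B, hC] at he he' h ⊢
      grind [SimpleGraph.adj_comm, SimpleGraph.ne_of_adj]
  have := Finset.le_card_sdiff B G.edgeFinset
  omega

theorem card_del {V : Type*} [Fintype V] (G : SimpleGraph V) (q : V) :
    G.edgeFinset.card ≤ (G.deleteIncidenceSet q).edgeFinset.card + G.degree q := by
  have := G.card_edgeFinset_deleteIncidenceSet q
  have h : (G.deleteIncidenceSet q).edgeFinset.card = G.edgeFinset.card - G.degree q := by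
    convert this
  omega

theorem mader {V : Type*} [Fintype V] (n : ℕ) : ∀ (S : Finset V) (G : SimpleGraph V),
    S.card = n + 3 → (∀ u v, G.Adj u v → u ∈ S) → Flat G → G.edgeFinset.card ≤ 3 * n + 3 := by
  induction n with
  | zero =>
    intro S G hS hG _
    have h : G.edgeFinset ⊆ S.sym2.filter (fun e => ¬ e.IsDiag) := by
      intro e
      induction e with | _ u v
      intro h
      simp at h
      simp [hG _ _ h, hG _ _ h.symm, h.ne]
    refine (Finset.card_le_card h).trans ?_
    rw [Finset.card_eq_three] at hS
    obtain ⟨a, b, c, h1, h2, h3, rfl⟩ := hS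
    have : ({a, b, c} : Finset V).sym2.filter (fun e => ¬ e.IsDiag)
        ⊆ {s(a, b), s(a, c), s(b, c)} := by
      intro e
      induction e with | _ u v
      simp
      grind
    exact (Finset.card_le_card this).trans Finset.card_le_three
  | succ n ih =>
    intro S G0 hS hG0 hF0
    by_contra hlt
    obtain ⟨E, hE, hEc⟩ := Finset.exists_subset_card_eq (s := G0.edgeFinset) (n := 3 * n + 7)
      (by omega)
    obtain ⟨G, hle, hc⟩ : ∃ G : SimpleGraph V, G ≤ G0 ∧ G.edgeFinset.card = 3 * n + 7 := by
      refine ⟨SimpleGraph.fromEdgeSet (E : Set (Sym2 V)), ?_, ?_⟩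
      · intro u v h
        have : s(u, v) ∈ E := by simpa using (SimpleGraph.fromEdgeSet_adj _).1 h |>.1
        simpa using hE this
      · rw [← hEc]
        congr 1
        ext e
        induction e with | _ u v
        simp only [SimpleGraph.mem_edgeFinset, SimpleGraph.mem_edgeSet,
          SimpleGraph.fromEdgeSet_adj, Finset.mem_coe]
        refine ⟨fun h => h.1, fun h => ⟨h, ?_⟩⟩
        have := hE h
        simp at this
        exact this.ne
    have hF : Flat G := hF0.mono hle
    have hG : ∀ u v, G.Adj u v → u ∈ S := fun u v h => hG0 u v (hle h)
    -- small degree vertex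
    have hsum : ∑ v ∈ S, G.degree v = 2 * (3 * n + 7) := by
      rw [← hc, ← G.sum_degrees_eq_twice_card_edges]
      refine Finset.sum_subset (Finset.subset_univ _) ?_
      intro v _ hv
      rw [← SimpleGraph.card_neighborFinset_eq_degree, Finset.card_eq_zero,
        Finset.eq_empty_iff_forall_notMem]
      intro w hw
      exact hv (hG v w (by simpa using hw))
    obtain ⟨v, hvS, hv5⟩ : ∃ v ∈ S, G.degree v ≤ 5 := by
      by_contra! h
      have := Finset.card_nsmul_le_sum S (fun v => G.degree v) 6 (fun v hv => h v hv)
      simp only [smul_eq_mul] at this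
      omega
    have hv4 : 4 ≤ G.degree v := by
      by_contra! h
      have h1 := ih (S.erase v) (G.deleteIncidenceSet v)
        (by rw [Finset.card_erase_of_mem hvS]; omega)
        (by
          intro a b hab
          have := (G.deleteIncidenceSet_adj).1 hab
          simp [this, hG a b this.1]) (hF.mono (G.deleteIncidenceSet_le v))
      have h2 := card_del G v
      have h3 : (G.deleteIncidenceSet v).edgeFinset.card ≤ 3 * n + 3 := by convert h1
      have h4 := h2.trans (Nat.add_le_add_right h3 _)
      omega
    have hcom : ∀ w, G.Adj v w → 3 ≤ (G.neighborFinset w ∩ G.neighborFinset v).card := by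
      intro w hw
      by_contra! h
      have h1 := ih (S.erase v) (contr G w v)
        (by rw [Finset.card_erase_of_mem hvS]; omega)
        (by
          rintro a b ⟨h1, h2, h3, h4⟩
          refine Finset.mem_erase.2 ⟨h1, ?_⟩
          rcases h4 with h5 | ⟨h6, h5⟩ | ⟨h6, h5⟩
          · exact hG _ _ h5
          · rw [h6]; exact hG _ _ hw.symm
          · exact hG _ _ h5.symm) (hF.contr w v hw.symm)
      have h2 := card_contr G w v hw.symm
      omega
    set N := G.neighborFinset v with hN
    have hNc : N.card = G.degree v := G.card_neighborFinset_eq_degree v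
    have hNa : ∀ w, w ∈ N ↔ G.Adj v w := fun w => by simp [hN]
    by_cases hcl : ∀ a ∈ N, ∀ b ∈ N, a ≠ b → G.Adj a b
    · obtain ⟨T, hT, hTc⟩ := Finset.exists_subset_card_eq (s := N) (n := 4) (by omega)
      obtain ⟨a, b, c, d, n1, n2, n3, n4, n5, n6, rfl⟩ := Finset.card_eq_four.1 hTc
      have ma := hT (show a ∈ _ by simp)
      have mb := hT (show b ∈ _ by simp)
      have mc := hT (show c ∈ _ by simp)
      have md := hT (show d ∈ _ by simp)
      have va := (hNa a).1 ma
      have vb := (hNa b).1 mb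
      have vc := (hNa c).1 mc
      have vd := (hNa d).1 md
      exact not_flat_K5 G hF v a b c d (by simp [va.ne, vb.ne, vc.ne, vd.ne, *]) va vb vc vd
        (hcl _ ma _ mb n1) (hcl _ ma _ mc n2) (hcl _ ma _ md n3) (hcl _ mb _ mc n4)
        (hcl _ mb _ md n5) (hcl _ mc _ md n6)
    · push Not at hcl
      obtain ⟨a, ha, b, hb, hab, hnab⟩ := hcl
      have hR : ((N.erase a).erase b).card ≤ 3 := by
        rw [Finset.card_erase_of_mem (by simp [hb, hab.symm]), Finset.card_erase_of_mem ha]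
        omega
      have sa : G.neighborFinset a ∩ N ⊆ (N.erase a).erase b := by
        intro z hz
        simp at hz ⊢
        refine ⟨?_, hz.1.ne', hz.2⟩
        rintro rfl; exact hnab hz.1
      have sb : G.neighborFinset b ∩ N ⊆ (N.erase a).erase b := by
        intro z hz
        simp at hz ⊢
        refine ⟨hz.1.ne', ?_, hz.2⟩
        rintro rfl; exact hnab hz.1.symm
      have ea := Finset.eq_of_subset_of_card_le sa (hR.trans (hcom a ((hNa a).1 ha)))
      have eb := Finset.eq_of_subset_of_card_le sb (hR.trans (hcom b ((hNa b).1 hb)))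
      have hR3 : ((N.erase a).erase b).card = 3 :=
        le_antisymm hR (ea ▸ hcom a ((hNa a).1 ha))
      obtain ⟨p, q, r, n1, n2, n3, hpqr⟩ := Finset.card_eq_three.1 hR3
      have key : ∀ z, z ∈ (N.erase a).erase b → G.Adj v z ∧ G.Adj a z ∧ G.Adj b z := by
        intro z hz
        have h1 := ea ▸ hz
        have h2 := eb ▸ hz
        simp at h1 h2
        exact ⟨(hNa z).1 h1.2, h1.1, h2.1⟩
      obtain ⟨p1, p2, p3⟩ := key p (by rw [hpqr]; simp)
      obtain ⟨q1, q2, q3⟩ := key q (by rw [hpqr]; simp)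
      obtain ⟨r1, r2, r3⟩ := key r (by rw [hpqr]; simp)
      have va := (hNa a).1 ha
      have vb := (hNa b).1 hb
      exact not_flat_K33 G hF v a b p q r (by
        simp [va.ne, vb.ne, p1.ne, p2.ne, p3.ne, q1.ne, q2.ne, q3.ne, r1.ne, r2.ne, r3.ne, *])
        p1 q1 r1 p2 q2 r2 p3 q3 r3

end


/-- The parts of `K_{2,9,9}`, on `Fin 20`. -/
def part (i : Fin 20) : Fin 3 := if i.val < 2 then 0 else if i.val < 11 then 1 else 2

/-- `K_{2,9,9}` on `Fin 20`. -/
def K : SimpleGraph (Fin 20) where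
  Adj i j := part i ≠ part j
  symm := ⟨fun _ _ h => Ne.symm h⟩
  loopless := ⟨fun _ h => h rfl⟩

instance : DecidableRel K.Adj := fun i j => inferInstanceAs (Decidable (part i ≠ part j))

theorem card_K : K.edgeFinset.card = 117 := by
  have h := K.sum_degrees_eq_twice_card_edges
  have h2 : ∑ v, K.degree v = 234 := by decide +kernel
  omega

theorem lower_K (n : ℕ) (H : Fin n → SimpleGraph (Fin 20)) (hH : ∀ i, Flat (H i))
    (hU : ∀ i j, K.Adj i j → ∃ k, (H k).Adj i j) : 3 ≤ n := by
  classical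
  have h1 : K.edgeFinset ⊆ Finset.univ.biUnion fun k => (H k).edgeFinset := by
    intro e
    induction e with | _ u v
    intro h
    simp at h ⊢
    exact hU _ _ h
  have h2 := (Finset.card_le_card h1).trans Finset.card_biUnion_le
  have h3 : ∑ k, (H k).edgeFinset.card ≤ ∑ k : Fin n, 54 := by
    refine Finset.sum_le_sum fun k _ => ?_
    have := mader 17 Finset.univ (H k) (by simp) (by simp) (hH k)
    convert this
  rw [card_K] at h2
  simp at h3
  omega

/-- Orientation determinant of three points. -/
def ori {R : Type*} [CommRing R] (a b c : R × R) : R :=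
  (b.1 - a.1) * (c.2 - a.2) - (b.2 - a.2) * (c.1 - a.1)

theorem planar_of_pts {V : Type*} (G : SimpleGraph V) (P : V → ℝ × ℝ)
    (hinj : Function.Injective P)
    (hgen : ∀ u v w, u ≠ v → u ≠ w → v ≠ w → ori (P u) (P v) (P w) ≠ 0)
    (hsep : ∀ u v a b, G.Adj u v → G.Adj a b → u ≠ a → u ≠ b → v ≠ a → v ≠ b →
      0 < ori (P u) (P v) (P a) * ori (P u) (P v) (P b) ∨
      0 < ori (P a) (P b) (P u) * ori (P a) (P b) (P v)) : IsPlanar G := by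
  classical
  have hex : ∀ e : G.edgeSet, ∃ p : V × V, (e : Sym2 V) = s(p.1, p.2) ∧ G.Adj p.1 p.2 := by
    rintro ⟨e, he⟩
    induction e with | _ u v
    exact ⟨(u, v), rfl, he⟩
  choose D hD hA using hex
  let seg : V → V → ℝ → ℝ × ℝ := fun u v t =>
    ((1 - t) * (P u).1 + t * (P v).1, (1 - t) * (P u).2 + t * (P v).2)
  have ori_seg : ∀ u v a b t, ori (P u) (P v) (seg a b t)
      = (1 - t) * ori (P u) (P v) (P a) + t * ori (P u) (P v) (P b) := by
    intro u v a b t; simp only [ori, seg]; ring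
  have ori_self : ∀ u v t, ori (P u) (P v) (seg u v t) = 0 := by
    intro u v t; simp only [ori, seg]; ring
  have seg0 : ∀ u v, seg u v 0 = P u := by intro u v; simp [seg]
  have seg1 : ∀ u v, seg u v 1 = P v := by intro u v; simp [seg]
  have seginj : ∀ u v, u ≠ v → ∀ s t, seg u v s = seg u v t → s = t := by
    intro u v huv s t h
    by_contra hst
    apply huv
    apply hinj
    have h1 := congrArg Prod.fst h
    have h2 := congrArg Prod.snd h
    simp only [seg] at h1 h2
    have hst' : s - t ≠ 0 := sub_ne_zero.2 hst
    refine Prod.ext ?_ ?_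
    · apply mul_left_cancel₀ hst'; linear_combination -h1
    · apply mul_left_cancel₀ hst'; linear_combination -h2
  have pos : ∀ (x y t : ℝ), 0 ≤ t → t ≤ 1 → 0 < x * y → (1 - t) * x + t * y ≠ 0 := by
    intro x y t h0 h1 hxy h
    rcases pos_and_pos_or_neg_and_neg_of_mul_pos hxy with ⟨hx, hy⟩ | ⟨hx, hy⟩
    · have : 0 < min x y := lt_min hx hy
      nlinarith [mul_nonneg (sub_nonneg.2 h1) (sub_nonneg.2 (min_le_left x y)),
        mul_nonneg h0 (sub_nonneg.2 (min_le_right x y))]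
    · have : max x y < 0 := max_lt hx hy
      nlinarith [mul_nonneg (sub_nonneg.2 h1) (sub_nonneg.2 (le_max_left x y)),
        mul_nonneg h0 (sub_nonneg.2 (le_max_right x y))]
  refine ⟨P, fun e t => seg (D e).1 (D e).2 t, hinj, ?_, ?_, ?_, ?_, ?_⟩
  · intro e; simp only [seg]; fun_prop
  · intro e; exact ⟨(D e).1, (D e).2, hD e, seg0 _ _, seg1 _ _⟩
  · intro e s t h
    exact Subtype.ext (seginj _ _ (hA e).ne _ _ h)
  · intro e t t0 t1 w h
    change seg (D e).1 (D e).2 t = P w at h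
    have h0 := ori_self (D e).1 (D e).2 t
    by_cases w1 : (D e).1 = w
    · apply t0
      apply seginj _ _ (hA e).ne
      rw [h, seg0, w1]
    by_cases w2 : (D e).2 = w
    · apply t1
      apply seginj _ _ (hA e).ne
      rw [h, seg1, w2]
    rw [h] at h0
    exact hgen _ _ _ (hA e).ne w1 w2 h0
  · intro e e' hne s t h
    have hne' : s((D e).1, (D e).2) ≠ s((D e').1, (D e').2) := by
      rw [← hD, ← hD]; exact fun h => hne (Subtype.ext h)
    have A1 := hA e
    have A2 := hA e'
    simp only at h ⊢
    generalize (D e).1 = u at *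
    generalize (D e).2 = v at *
    generalize (D e').1 = a at *
    generalize (D e').2 = b at *
    have h0 := ori_self u v s
    rw [h, ori_seg] at h0
    have z1 : ori (P u) (P v) (P u) = 0 := by simp only [ori]; ring
    have z2 : ori (P u) (P v) (P v) = 0 := by simp only [ori]; ring
    by_cases ha : a = u ∨ a = v
    · have hb : u ≠ b ∧ v ≠ b := by
        constructor <;> rintro rfl <;> rcases ha with rfl | rfl <;> simp at hne' A2
      have za : ori (P u) (P v) (P a) = 0 := by rcases ha with rfl | rfl <;> assumption
      rw [za, mul_zero, zero_add] at h0
      have := (mul_eq_zero.1 h0).resolve_right (hgen _ _ _ A1.ne hb.1 hb.2)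
      rw [h, this, seg0]
      exact ⟨a, rfl⟩
    by_cases hb : b = u ∨ b = v
    · push Not at ha
      have zb : ori (P u) (P v) (P b) = 0 := by rcases hb with rfl | rfl <;> assumption
      rw [zb, mul_zero, add_zero] at h0
      have := (mul_eq_zero.1 h0).resolve_right (hgen _ _ _ A1.ne ha.1.symm ha.2.symm)
      have : (t : ℝ) = 1 := by linarith
      rw [h, this, seg1]
      exact ⟨b, rfl⟩
    push Not at ha hb
    exfalso
    rcases hsep u v a b A1 A2 ha.1.symm hb.1.symm ha.2.symm hb.2.symm with hs | hs
    · exact pos _ _ _ t.2.1 t.2.2 hs h0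
    · have h1 := ori_self a b t
      rw [← h, ori_seg] at h1
      exact pos _ _ _ s.2.1 s.2.2 hs h1

theorem ori_cast (a b c : ℤ × ℤ) :
    ori ((a.1 : ℝ), (a.2 : ℝ)) ((b.1 : ℝ), (b.2 : ℝ)) ((c.1 : ℝ), (c.2 : ℝ))
      = ((ori a b c : ℤ) : ℝ) := by
  simp only [ori]; push_cast; ring

/-- The graph on `Fin 20` with a given list of edges, pulled back along a map. -/
def listG {V : Type*} (φ : V → Fin 20) (L : List (Fin 20 × Fin 20)) : SimpleGraph V where
  Adj x y := φ x ≠ φ y ∧ ((φ x, φ y) ∈ L ∨ (φ y, φ x) ∈ L)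
  symm := ⟨fun _ _ h => ⟨h.1.symm, h.2.symm⟩⟩
  loopless := ⟨fun _ h => h.1 rfl⟩

/-- Two independent segments are separated. -/
def sep (P : Fin 20 → ℤ × ℤ) (e f : Fin 20 × Fin 20) : Prop :=
  0 < ori (P e.1) (P e.2) (P f.1) * ori (P e.1) (P e.2) (P f.2) ∨
  0 < ori (P f.1) (P f.2) (P e.1) * ori (P f.1) (P f.2) (P e.2)

instance (P : Fin 20 → ℤ × ℤ) (e f : Fin 20 × Fin 20) : Decidable (sep P e f) :=
  inferInstanceAs (Decidable (_ ∨ _))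

theorem sep_swap1 (P : Fin 20 → ℤ × ℤ) (u v : Fin 20) (f : Fin 20 × Fin 20)
    (h : sep P (u, v) f) : sep P (v, u) f := by
  simp only [sep, ori] at h ⊢
  rcases h with h | h
  · left; linear_combination h
  · right; linear_combination h

theorem sep_swap2 (P : Fin 20 → ℤ × ℤ) (u v : Fin 20) (f : Fin 20 × Fin 20)
    (h : sep P f (u, v)) : sep P f (v, u) := by
  have := sep_swap1 P u v f h.symm
  exact Or.symm this

theorem planar_listG {V : Type*} (φ : V → Fin 20) (hφ : Function.Injective φ)
    (L : List (Fin 20 × Fin 20)) (P : Fin 20 → ℤ × ℤ)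
    (hinj : ∀ i j, P i = P j → i = j)
    (hgen : ∀ u v w, u ≠ v → u ≠ w → v ≠ w → ori (P u) (P v) (P w) ≠ 0)
    (hsep : ∀ e ∈ L, ∀ f ∈ L, e.1 ≠ f.1 → e.1 ≠ f.2 → e.2 ≠ f.1 → e.2 ≠ f.2 → sep P e f) :
    IsPlanar (listG φ L) := by
  refine planar_of_pts _ (fun x => (((P (φ x)).1 : ℝ), ((P (φ x)).2 : ℝ))) ?_ ?_ ?_
  · intro x y h
    simp only [Prod.mk.injEq, Int.cast_inj] at h
    exact hφ (hinj _ _ (Prod.ext h.1 h.2))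
  · intro u v w h1 h2 h3
    rw [ori_cast]
    exact_mod_cast hgen _ _ _ (hφ.ne h1) (hφ.ne h2) (hφ.ne h3)
  · intro u v a b h1 h2 n1 n2 n3 n4
    have n1 := hφ.ne n1
    have n2 := hφ.ne n2
    have n3 := hφ.ne n3
    have n4 := hφ.ne n4
    have key : sep P (φ u, φ v) (φ a, φ b) := by
      rcases h1.2 with h1 | h1 <;> rcases h2.2 with h2 | h2
      · exact hsep _ h1 _ h2 n1 n2 n3 n4
      · exact sep_swap2 _ _ _ _ (hsep _ h1 _ h2 n2 n1 n4 n3)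
      · exact sep_swap1 _ _ _ _ (hsep _ h1 _ h2 n3 n4 n1 n2)
      · exact sep_swap1 _ _ _ _ (sep_swap2 _ _ _ _ (hsep _ h1 _ h2 n4 n3 n2 n1))
    simp only [ori_cast]
    rcases key with h | h
    · left; exact_mod_cast h
    · right; exact_mod_cast h

def edges0 : List (Fin 20 × Fin 20) :=
  [
    (0, 2), (0, 3), (0, 4), (0, 6), (0, 9), (0, 12), (0, 15), (0, 16), (0, 17), (0, 19), (1, 2),
    (1, 3), (1, 5), (1, 6), (1, 8), (1, 10), (1, 11), (1, 12), (1, 13), (1, 15), (1, 19), (2, 13),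
    (2, 14), (2, 18), (3, 11), (3, 15), (3, 17), (4, 16), (4, 19), (5, 14), (6, 12), (6, 16),
    (7, 14), (8, 11), (9, 12), (9, 13), (10, 11), (10, 14), (10, 17), (10, 18)]

def pts0 : Fin 20 → ℤ × ℤ :=
  ![
    (0, 0), (27, 54), (15, 95), (10, 27), (11, 19), (23, 58), (19, 30), (23, 57), (20, 56),
    (200, 52), (18, 60), (17, 50), (31, 36), (10, 200), (22, 63), (9, 22), (14, 24), (12, 49),
    (14, 64), (19, 35)]

def edges1 : List (Fin 20 × Fin 20) :=
  [
    (0, 5), (0, 7), (0, 11), (0, 13), (0, 14), (0, 18), (1, 4), (1, 14), (1, 17), (2, 17),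
    (2, 19), (3, 12), (3, 16), (4, 11), (4, 14), (4, 15), (4, 17), (5, 12), (5, 13), (5, 16),
    (5, 18), (5, 19), (6, 14), (6, 18), (7, 11), (7, 13), (7, 15), (7, 17), (7, 19), (8, 12),
    (8, 14), (8, 16), (8, 17), (8, 18), (8, 19), (9, 15), (9, 17), (10, 16), (10, 19)]

def pts1 : Fin 20 → ℤ × ℤ :=
  ![
    (0, 0), (52, 35), (73, 36), (104, 85), (45, 27), (200, 45), (57, 85), (68, 28), (92, 76),
    (60, 33), (136, 62), (39, 19), (117, 101), (88, 23), (48, 48), (57, 29), (115, 84), (67, 40),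
    (63, 200), (111, 47)]

def edges2 : List (Fin 20 × Fin 20) :=
  [
    (0, 8), (0, 10), (1, 7), (1, 9), (1, 16), (1, 18), (2, 11), (2, 12), (2, 15), (2, 16),
    (3, 13), (3, 14), (3, 18), (3, 19), (4, 12), (4, 13), (4, 18), (5, 11), (5, 15), (5, 17),
    (6, 11), (6, 13), (6, 15), (6, 17), (6, 19), (7, 12), (7, 16), (7, 18), (8, 13), (8, 15),
    (9, 11), (9, 14), (9, 16), (9, 18), (9, 19), (10, 12), (10, 13), (10, 15)]

def pts2 : Fin 20 → ℤ × ℤ :=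
  ![
    (47, 165), (98, 91), (0, 0), (94, 111), (70, 129), (112, 110), (118, 102), (87, 94),
    (38, 177), (108, 90), (48, 159), (200, 37), (62, 121), (59, 153), (106, 98), (20, 200),
    (90, 70), (128, 95), (88, 104), (121, 92)]

theorem planar0 {V : Type*} (φ : V → Fin 20) (hφ : Function.Injective φ) :
    IsPlanar (listG φ edges0) :=
  planar_listG φ hφ edges0 pts0 (by decide +kernel) (by decide +kernel) (by decide +kernel)

theorem planar1 {V : Type*} (φ : V → Fin 20) (hφ : Function.Injective φ) :
    IsPlanar (listG φ edges1) :=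
  planar_listG φ hφ edges1 pts1 (by decide +kernel) (by decide +kernel) (by decide +kernel)

theorem planar2 {V : Type*} (φ : V → Fin 20) (hφ : Function.Injective φ) :
    IsPlanar (listG φ edges2) :=
  planar_listG φ hφ edges2 pts2 (by decide +kernel) (by decide +kernel) (by decide +kernel)

/-- Numbering of the vertices of `K_{2,9,9}`. -/
def num : (Σ i, (![Fin 2, Fin 9, Fin 9] : Fin 3 → Type) i) → Fin 20
  | ⟨0, i⟩ => Fin.castLE (by norm_num : 2 ≤ 20) i
  | ⟨1, i⟩ => Fin.castLE (by norm_num : 11 ≤ 20) (Fin.natAdd 2 (i : Fin 9))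
  | ⟨2, i⟩ => Fin.natAdd 11 (i : Fin 9)

theorem num_part : ∀ x, part (num x) = x.1
  | ⟨0, i⟩ => (by decide : ∀ i : Fin 2, part (Fin.castLE (by norm_num : 2 ≤ 20) i) = 0) i
  | ⟨1, i⟩ => (by decide : ∀ i : Fin 9,
      part (Fin.castLE (by norm_num : 11 ≤ 20) (Fin.natAdd 2 i)) = 1) i
  | ⟨2, i⟩ => (by decide : ∀ i : Fin 9, part (Fin.natAdd 11 i) = 2) i

theorem num_inj : Function.Injective num := by
  intro x y h
  have hp : x.1 = y.1 := by rw [← num_part, ← num_part, h]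
  obtain ⟨i, x⟩ := x
  obtain ⟨j, y⟩ := y
  obtain rfl : i = j := hp
  congr 1
  match i, x, y, h with
  | 0, x, y, h => exact Fin.castLE_injective (by norm_num : 2 ≤ 20) h
  | 1, x, y, h => exact Fin.natAdd_injective _ _ (Fin.castLE_injective (by norm_num : 11 ≤ 20) h)
  | 2, x, y, h => exact Fin.natAdd_injective _ _ h

theorem num_surj : Function.Surjective num := by
  intro i
  by_cases h0 : i.val < 2
  · exact ⟨⟨0, (⟨i.val, h0⟩ : Fin 2)⟩, rfl⟩
  by_cases h1 : i.val < 11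
  · refine ⟨⟨1, (⟨i.val - 2, by omega⟩ : Fin 9)⟩, Fin.ext ?_⟩
    change 2 + (i.val - 2) = i.val
    omega
  · refine ⟨⟨2, (⟨i.val - 11, by omega⟩ : Fin 9)⟩, Fin.ext ?_⟩
    change 11 + (i.val - 11) = i.val
    omega

theorem cover_K : ∀ i j : Fin 20, part i ≠ part j →
    ((i, j) ∈ edges0 ∨ (j, i) ∈ edges0) ∨ ((i, j) ∈ edges1 ∨ (j, i) ∈ edges1) ∨
      ((i, j) ∈ edges2 ∨ (j, i) ∈ edges2) := by
  decide +kernel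

theorem listG_le (L : List (Fin 20 × Fin 20)) (hL : ∀ e ∈ L, part e.1 ≠ part e.2) :
    listG num L ≤ completeMultipartiteGraph ![Fin 2, Fin 9, Fin 9] := by
  rintro x y ⟨_, h⟩
  change x.1 ≠ y.1
  rw [← num_part x, ← num_part y]
  rcases h with h | h
  · exact hL _ h
  · exact (hL _ h).symm

theorem thickness_K299 :
    thickness (completeMultipartiteGraph ![Fin 2, Fin 9, Fin 9]) = 3 := by
  unfold thickness
  have mem : 3 ∈ {n : ℕ | ∃ H : Fin n → SimpleGraph (Σ i, ![Fin 2, Fin 9, Fin 9] i),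
      (∀ i, H i ≤ completeMultipartiteGraph ![Fin 2, Fin 9, Fin 9]) ∧ (∀ i, IsPlanar (H i)) ∧
      (⨆ i, H i) = completeMultipartiteGraph ![Fin 2, Fin 9, Fin 9]} := by
    have hle : ∀ i : Fin 3, (![listG num edges0, listG num edges1, listG num edges2] i) ≤
        completeMultipartiteGraph ![Fin 2, Fin 9, Fin 9] := by
      intro i
      fin_cases i
      · exact listG_le _ (by decide +kernel)
      · exact listG_le _ (by decide +kernel)
      · exact listG_le _ (by decide +kernel)
    refine ⟨![listG num edges0, listG num edges1, listG num edges2], hle, ?_, ?_⟩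
    · intro i
      fin_cases i
      · exact planar0 num num_inj
      · exact planar1 num num_inj
      · exact planar2 num num_inj
    · refine le_antisymm (iSup_le hle) ?_
      intro x y hxy
      rw [SimpleGraph.iSup_adj]
      have hp : part (num x) ≠ part (num y) := by
        rw [num_part, num_part]; exact hxy
      have hn : num x ≠ num y := fun h => hp (by rw [h])
      rcases cover_K _ _ hp with h | h | h
      · exact ⟨0, hn, h⟩
      · exact ⟨1, hn, h⟩
      · exact ⟨2, hn, h⟩
  refine le_antisymm (Nat.sInf_le mem) ?_
  refine le_csInf ⟨3, mem⟩ ?_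
  rintro n ⟨H, _, hpl, hsup⟩
  let ψ := Function.surjInv num_surj
  have hψ : ∀ i, num (ψ i) = i := Function.surjInv_eq num_surj
  refine lower_K n (fun k => (H k).comap ψ)
    (fun k => (flat_of_planar _ (hpl k)).comap ψ (Function.injective_surjInv num_surj)) ?_
  intro i j hij
  have h : (completeMultipartiteGraph ![Fin 2, Fin 9, Fin 9]).Adj (ψ i) (ψ j) := by
    change (ψ i).1 ≠ (ψ j).1
    rw [← num_part, ← num_part, hψ, hψ]
    exact hij
  rw [← hsup, SimpleGraph.iSup_adj] at h
  exact h
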